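/- arXiv:1309.1697 — 3 statements merged into one kernel-verified Lean document; each statement's English description precedes it below -/
import Mathlib

section
/- Let a < b be real numbers, h = b − a, c ∈ ℝ, and define v : [a,b] → ℝ by v(s) = c·((h − (s−a)/2)·(s−a) + 1). Then v(a) = c, and for every continuously differentiable δ : [a,b] → ℝ one has ∫_a^b v′(s)·δ′(s) ds + h·v(a)·δ(a) = c·∫_a^b δ(s) ds. -/
open MeasureTheory intervalIntegral

/- The derivative of `v` is `c * (b - s)`, which vanishes at `b`. Integrating `⟨v', δ'⟩` by parts
therefore leaves only a boundary term at `a`, namely `-h * c * δ a`, and since `v a = c` this is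
cancelled by the point value `h * v a * δ a` in the inner product. Integration by parts needs `δ`
only absolutely continuous, so the identity extends from `C¹` to `H¹`, and even to `W^{1,1}`. -/

section AbsolutelyContinuous

variable {E : Type*} [NormedAddCommGroup E] [NormedSpace ℝ E] {f f' : ℝ → E} {a b : ℝ}

theorem absolutelyContinuousOnInterval_of_hasDerivWithinAt
    (hf : ∀ x ∈ Set.uIcc a b, HasDerivWithinAt f (f' x) (Set.uIcc a b) x)
    (hf' : ContinuousOn f' (Set.uIcc a b)) : AbsolutelyContinuousOnInterval f a b := by
  obtain ⟨K, hK⟩ := (isCompact_uIcc.image_of_continuousOn hf'.nnnorm).bddAbove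
  exact ((convex_uIcc a b).lipschitzOnWith_of_nnnorm_hasDerivWithin_le hf
    fun x hx ↦ hK (Set.mem_image_of_mem _ hx)).absolutelyContinuousOnInterval

theorem ae_hasDerivAt_of_hasDerivWithinAt
    (hf : ∀ x ∈ Set.uIcc a b, HasDerivWithinAt f (f' x) (Set.uIcc a b) x) :
    ∀ᵐ x, x ∈ Set.uIoc a b → HasDerivAt f (f' x) x := by
  filter_upwards [Measure.ae_ne volume (max a b)] with x hx_ne hx
  have hx_nhds : Set.uIcc a b ∈ nhds x := Icc_mem_nhds hx.1 (hx.2.lt_of_ne hx_ne)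
  exact (hf x (Set.uIoc_subset_uIcc hx)).hasDerivAt hx_nhds

end AbsolutelyContinuous

theorem integral_right_sub_mul_deriv {f : ℝ → ℝ} {a b : ℝ}
    (hf : AbsolutelyContinuousOnInterval f a b) :
    ∫ s in a..b, (b - s) * deriv f s = (∫ s in a..b, f s) - (b - a) * f a := by
  have hsub : AbsolutelyContinuousOnInterval (fun s ↦ b - s) a b :=
    (contDiff_const.sub contDiff_id).contDiffOn.absolutelyContinuousOnInterval
  rw [hsub.integral_mul_deriv_eq_deriv_mul hf]
  simp only [deriv_const_sub_id, neg_one_mul, intervalIntegral.integral_neg]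
  ring

/-- The component `v` of the optimal test function `Θ(φ_i, 0, 0)` on an element with left endpoint
`a` and length `h`, where `c = ⟨φ_i, 1⟩_Γ`. The quadratic polynomial is taken on all of `ℝ`, so
that `deriv` is its derivative at the endpoints of the element as well. -/
noncomputable def optimalTestFunction (a h c s : ℝ) : ℝ :=
  c * ((h - (s - a) / 2) * (s - a) + 1)

theorem optimalTestFunction_left (a h c : ℝ) : optimalTestFunction a h c a = c := by
  simp [optimalTestFunction]

theorem deriv_optimalTestFunction (a h c s : ℝ) :
    deriv (optimalTestFunction a h c) s = c * (h - (s - a)) := by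
  have hsub : HasDerivAt (fun s : ℝ ↦ s - a) 1 s := (hasDerivAt_id s).sub_const a
  have hv : HasDerivAt (optimalTestFunction a h c) _ s :=
    ((((hsub.div_const 2).const_sub h).mul hsub).add_const 1).const_mul c
  rw [hv.deriv]
  ring

theorem optimal_test_function_phi_general (a b c : ℝ) :
    optimalTestFunction a (b - a) c a = c ∧
    ∀ δ δ' : ℝ → ℝ,
      AbsolutelyContinuousOnInterval δ a b →
      (∀ᵐ x, x ∈ Set.uIoc a b → HasDerivAt δ (δ' x) x) →
      (∫ s in a..b, deriv (optimalTestFunction a (b - a) c) s * δ' s)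
          + (b - a) * optimalTestFunction a (b - a) c a * δ a
        = c * ∫ s in a..b, δ s := by
  refine ⟨optimalTestFunction_left a (b - a) c, fun δ δ' hδ hδ' ↦ ?_⟩
  have hderiv : ∫ s in a..b, deriv (optimalTestFunction a (b - a) c) s * δ' s
      = c * ∫ s in a..b, (b - s) * deriv δ s := by
    rw [← intervalIntegral.integral_const_mul]
    refine intervalIntegral.integral_congr_ae ?_
    filter_upwards [hδ'] with s hs hs_mem
    rw [deriv_optimalTestFunction, (hs hs_mem).deriv]
    ring
  rw [hderiv, integral_right_sub_mul_deriv hδ, optimalTestFunction_left]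
  ring

/-- The analytically computed optimal test function component
`v(s) = c·((h − (s−a)/2)·(s−a) + 1)` on an element `[a,b]` of length `h = b−a`
satisfies `v(a) = c` and solves the local variational problem
`⟨v',δ'⟩_T + h·v(a)·δ(a) = c·⟨δ,1⟩_T` for all `δ ∈ C¹([a,b])`. -/
theorem optimal_test_function_phi
    (a b : ℝ) (hab : a < b) (h : ℝ) (hh : h = b - a) (c : ℝ)
    (v : ℝ → ℝ) (hv : v = fun s => c * ((h - (s - a) / 2) * (s - a) + 1)) :
    v a = c ∧
    ∀ (δ δ' : ℝ → ℝ),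
      (∀ x ∈ Set.Icc a b, HasDerivWithinAt δ (δ' x) (Set.Icc a b) x) →
      ContinuousOn δ' (Set.Icc a b) →
      (∫ s in a..b, deriv v s * δ' s) + h * v a * δ a
        = c * ∫ s in a..b, δ s := by
  subst hh hv
  rw [← Set.uIcc_of_le hab.le]
  exact (optimal_test_function_phi_general a b c).imp_right fun solves δ δ' hδ hδ' ↦
    solves δ δ' (absolutelyContinuousOnInterval_of_hasDerivWithinAt hδ hδ')
      (ae_hasDerivAt_of_hasDerivWithinAt hδ)
end

section
/- For every x ∈ [−1,1], the (Lebesgue) integral ∫_{−1}^{1} t·log|x−t| / √(1−t²) dt exists and equals −π·x. -/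
open MeasureTheory

/-!
The weighted Chebyshev polynomials `T n / √(1 - t²)`, `n ≥ 1`, are mapped by the logarithmic kernel
to `-(π / n) • T n`; the case `n = 1` is the identity. With `t = cos θ` and `x = cos a`, the
factorisation `(1 - cos (θ - a)) (1 - cos (θ + a)) = (cos a - cos θ)²` splits the kernel into two
translates of the even `2π`-periodic function `log (1 - cos u)`. Convolution with such a function
multiplies cosines by its Fourier coefficients, which are computed by a telescoping argument from
`d/du [(sin ((n + 1) u) - sin (n u)) log (1 - cos u)]`.
-/

open Polynomial.Chebyshev (T)

section ChebyshevSubstitution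

variable (g : ℝ → ℝ)

theorem integrableOn_div_sqrt_one_sub_sq_iff :
    IntegrableOn (fun t => g t / √(1 - t ^ 2)) (Set.Ioo (-1) 1) ↔
      IntervalIntegrable (fun θ => g (Real.cos θ)) volume 0 Real.pi := by
  have image_cos : Real.cos '' Set.Ioo 0 Real.pi = Set.Ioo (-1) 1 := by
    rw [Real.continuousOn_cos.image_Ioo_of_strictAntiOn Real.pi_nonneg Real.strictAntiOn_cos,
      Real.cos_pi, Real.cos_zero]
  have jacobian : Set.EqOn
      (fun θ => (-(-Real.sin θ)) • (g (Real.cos θ) / √(1 - Real.cos θ ^ 2)))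
      (fun θ => g (Real.cos θ)) (Set.Ioo 0 Real.pi) := by
    intro θ hθ
    have hsin := Real.sin_pos_of_mem_Ioo hθ
    simp only [neg_neg, smul_eq_mul, ← Real.sin_sq, Real.sqrt_sq hsin.le]
    exact mul_div_cancel₀ _ hsin.ne'
  rw [← image_cos, integrableOn_image_iff_integrableOn_deriv_smul_of_antitoneOn measurableSet_Ioo
      (fun θ _ => (Real.hasDerivAt_cos θ).hasDerivWithinAt)
      (Real.strictAntiOn_cos.antitoneOn.mono Set.Ioo_subset_Icc_self),
    integrableOn_congr_fun jacobian measurableSet_Ioo,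
    intervalIntegrable_iff_integrableOn_Ioo_of_le Real.pi_nonneg]

theorem integral_div_sqrt_one_sub_sq :
    ∫ t in Set.Ioo (-1) 1, g t / √(1 - t ^ 2) = ∫ θ in 0..Real.pi, g (Real.cos θ) := by
  rw [← Polynomial.Chebyshev.integral_measureT_eq_integral_cos,
    Polynomial.Chebyshev.integral_measureT, intervalIntegral.integral_of_le (by norm_num),
    integral_Ioc_eq_integral_Ioo]
  simp only [Real.sqrt_inv, div_eq_mul_inv]

end ChebyshevSubstitution

section EvenConvolution

theorem integral_neg_self_eq_integral_add_comp_neg {g : ℝ → ℝ} {b : ℝ}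
    (hg : IntervalIntegrable g volume (-b) b) :
    ∫ θ in -b..b, g θ = ∫ θ in 0..b, (g θ + g (-θ)) := by
  have zero_mem : (0 : ℝ) ∈ Set.uIcc (-b) b := by
    rcases le_total 0 b with hb | hb
    · exact Set.mem_uIcc_of_le (neg_nonpos.2 hb) hb
    · exact Set.mem_uIcc_of_ge hb (neg_nonneg.2 hb)
  have hneg : IntervalIntegrable g volume (-b) 0 :=
    hg.mono_set (Set.uIcc_subset_uIcc_left zero_mem)
  have hpos : IntervalIntegrable g volume 0 b :=
    hg.mono_set (Set.uIcc_subset_uIcc_right zero_mem)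
  have hrefl : IntervalIntegrable (fun θ => g (-θ)) volume 0 b := by
    simpa using (hneg.comp_sub_left 0).symm
  rw [intervalIntegral.integral_add hpos hrefl, intervalIntegral.integral_comp_neg, neg_zero,
    add_comm, intervalIntegral.integral_add_adjacent_intervals hneg hpos]

theorem integral_cos_mul_add_translates {f : ℝ → ℝ} (heven : f.Even)
    (hper : f.Periodic (2 * Real.pi)) (hint : IntervalIntegrable f volume 0 (2 * Real.pi))
    (n : ℕ) (a : ℝ) :
    ∫ θ in 0..Real.pi, Real.cos (n * θ) * (f (θ - a) + f (θ + a)) =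
      2 * Real.cos (n * a) * ∫ u in 0..Real.pi, Real.cos (n * u) * f u := by
  have hf (b c : ℝ) : IntervalIntegrable f volume b c :=
    hper.intervalIntegrable₀ Real.two_pi_pos.ne' hint b c
  have cos_periodic : (fun u => Real.cos (n * (u + a)) * f u).Periodic (2 * Real.pi) := by
    intro u
    simp only [hper u, show n * (u + 2 * Real.pi + a) = n * (u + a) + n * (2 * Real.pi) by ring,
      Real.cos_add_nat_mul_two_pi]
  calc ∫ θ in 0..Real.pi, Real.cos (n * θ) * (f (θ - a) + f (θ + a))
    _ = ∫ θ in -Real.pi..Real.pi, Real.cos (n * θ) * f (θ - a) := by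
      rw [integral_neg_self_eq_integral_add_comp_neg]
      · simp only [mul_neg, Real.cos_neg, ← neg_add', heven _, mul_add]
      · refine IntervalIntegrable.continuousOn_mul ?_ (by fun_prop)
        simpa using (hf (-Real.pi - a) (Real.pi - a)).comp_sub_right a
    _ = ∫ u in (-Real.pi - a)..(-Real.pi - a + 2 * Real.pi), Real.cos (n * (u + a)) * f u := by
      rw [show -Real.pi - a + 2 * Real.pi = Real.pi - a by ring,
        ← intervalIntegral.integral_comp_sub_right]
      simp only [sub_add_cancel]
    _ = ∫ u in -Real.pi..Real.pi, Real.cos (n * (u + a)) * f u := by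
      rw [cos_periodic.intervalIntegral_add_eq _ (-Real.pi)]
      congr 1
      ring
    _ = ∫ u in 0..Real.pi, 2 * Real.cos (n * a) * (Real.cos (n * u) * f u) := by
      rw [integral_neg_self_eq_integral_add_comp_neg ((hf _ _).continuousOn_mul (by fun_prop))]
      refine intervalIntegral.integral_congr fun u _ => ?_
      simp only [heven u, mul_add, mul_neg, Real.cos_add, Real.cos_neg, Real.sin_neg]
      ring
    _ = 2 * Real.cos (n * a) * ∫ u in 0..Real.pi, Real.cos (n * u) * f u :=
      intervalIntegral.integral_const_mul _ _

end EvenConvolution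

section FourierCoefficients

theorem intervalIntegrable_log_sub_cos (x b c : ℝ) :
    IntervalIntegrable (fun θ => Real.log (x - Real.cos θ)) volume b c := by
  have hmero : MeromorphicOn (fun θ => x - Real.cos θ) (Set.uIcc b c) := fun θ _ =>
    AnalyticAt.meromorphicAt (by fun_prop)
  exact hmero.intervalIntegrable_log

theorem intervalIntegrable_mul_log_sub_cos {g : ℝ → ℝ} (hg : Continuous g) (x b c : ℝ) :
    IntervalIntegrable (fun θ => g θ * Real.log (x - Real.cos θ)) volume b c :=
  (intervalIntegrable_log_sub_cos x b c).continuousOn_mul hg.continuousOn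

theorem continuous_sin_half_mul_log_one_sub_cos :
    Continuous fun u : ℝ => Real.sin (u / 2) * Real.log (1 - Real.cos u) := by
  have expand (u : ℝ) : Real.sin (u / 2) * Real.log (1 - Real.cos u) =
      Real.log 2 * Real.sin (u / 2) + 2 * (Real.sin (u / 2) * Real.log (Real.sin (u / 2))) := by
    rcases eq_or_ne (Real.sin (u / 2)) 0 with hsin | hsin
    · simp only [hsin, zero_mul, mul_zero, add_zero]
    · have half_angle : 1 - Real.cos u = 2 * Real.sin (u / 2) ^ 2 := by
        rw [Real.sin_sq_eq_half_sub, mul_div_cancel₀ u two_ne_zero]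
        ring
      rw [half_angle, Real.log_mul two_ne_zero (pow_ne_zero 2 hsin), Real.log_pow]
      push_cast
      ring
  have hlog : Continuous fun u : ℝ => Real.sin (u / 2) * Real.log (Real.sin (u / 2)) :=
    Real.continuous_mul_log.comp (f := fun u : ℝ => Real.sin (u / 2)) (by fun_prop)
  simp only [expand]
  exact Continuous.add (by fun_prop) (continuous_const.mul hlog)

theorem continuous_sin_sub_sin_mul_log_one_sub_cos (p : ℝ) :
    Continuous fun u : ℝ =>
      (Real.sin ((p + 1) * u) - Real.sin (p * u)) * Real.log (1 - Real.cos u) := by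
  have factor (u : ℝ) :
      (Real.sin ((p + 1) * u) - Real.sin (p * u)) * Real.log (1 - Real.cos u) =
        2 * Real.cos ((p + 1 / 2) * u) * (Real.sin (u / 2) * Real.log (1 - Real.cos u)) := by
    rw [Real.sin_sub_sin, show ((p + 1) * u - p * u) / 2 = u / 2 by ring,
      show ((p + 1) * u + p * u) / 2 = (p + 1 / 2) * u by ring]
    ring
  simp only [factor]
  exact Continuous.mul (by fun_prop) continuous_sin_half_mul_log_one_sub_cos

theorem hasDerivAt_sin_sub_sin_mul_log_one_sub_cos (p : ℝ) {u : ℝ} (hu : Real.cos u ≠ 1) :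
    HasDerivAt
      (fun u => (Real.sin ((p + 1) * u) - Real.sin (p * u)) * Real.log (1 - Real.cos u))
      ((p + 1) * (Real.cos ((p + 1) * u) * Real.log (1 - Real.cos u))
        - p * (Real.cos (p * u) * Real.log (1 - Real.cos u))
        + (Real.cos ((p + 1) * u) + Real.cos (p * u))) u := by
  have hne : 1 - Real.cos u ≠ 0 := sub_ne_zero.2 hu.symm
  have deriv_sin (q : ℝ) : HasDerivAt (fun u => Real.sin (q * u)) (q * Real.cos (q * u)) u := by
    simpa [mul_comm] using ((hasDerivAt_id u).const_mul q).sin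
  have deriv_log : HasDerivAt (fun u => Real.log (1 - Real.cos u))
      (Real.sin u / (1 - Real.cos u)) u := by
    simpa using ((Real.hasDerivAt_cos u).const_sub 1).log hne
  have cancel : (Real.sin ((p + 1) * u) - Real.sin (p * u)) * Real.sin u =
      (1 - Real.cos u) * (Real.cos ((p + 1) * u) + Real.cos (p * u)) := by
    rw [add_one_mul, Real.sin_add, Real.cos_add]
    linear_combination Real.cos (p * u) * Real.sin_sq_add_cos_sq u
  refine (((deriv_sin (p + 1)).sub (deriv_sin p)).mul deriv_log).congr_deriv ?_
  rw [Pi.sub_apply, ← mul_div_assoc, cancel, mul_div_cancel_left₀ _ hne]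
  ring

theorem integral_cos_natCast_mul_eq_zero {n : ℕ} (hn : n ≠ 0) :
    ∫ u in 0..Real.pi, Real.cos (n * u) = 0 := by
  rw [intervalIntegral.integral_comp_mul_left _ (Nat.cast_ne_zero.2 hn), integral_cos,
    Real.sin_nat_mul_pi, mul_zero, Real.sin_zero, sub_zero, smul_zero]

theorem succ_mul_integral_cos_mul_log_one_sub_cos (n : ℕ) :
    (n + 1) * (∫ u in 0..Real.pi, Real.cos ((n + 1) * u) * Real.log (1 - Real.cos u)) =
      n * (∫ u in 0..Real.pi, Real.cos (n * u) * Real.log (1 - Real.cos u))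
        - ∫ u in 0..Real.pi, Real.cos (n * u) := by
  have hlog (q : ℝ) : IntervalIntegrable
      (fun u => Real.cos (q * u) * Real.log (1 - Real.cos u)) volume 0 Real.pi :=
    intervalIntegrable_mul_log_sub_cos (by fun_prop) 1 0 Real.pi
  have hcos (q : ℝ) : IntervalIntegrable (fun u => Real.cos (q * u)) volume 0 Real.pi :=
    Continuous.intervalIntegrable (by fun_prop) 0 Real.pi
  have integral_deriv := intervalIntegral.integral_eq_sub_of_hasDerivAt_of_le Real.pi_nonneg
    (continuous_sin_sub_sin_mul_log_one_sub_cos n).continuousOn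
    (fun u hu => hasDerivAt_sin_sub_sin_mul_log_one_sub_cos n
      (Real.cos_zero ▸ Real.strictAntiOn_cos.injOn.ne
        (Set.Ioo_subset_Icc_self hu) (Set.left_mem_Icc.2 Real.pi_nonneg) hu.1.ne'))
    ((((hlog _).const_mul _).sub ((hlog _).const_mul _)).add ((hcos _).add (hcos _)))
  have succ_integral_zero : ∫ u in 0..Real.pi, Real.cos ((n + 1) * u) = 0 :=
    mod_cast integral_cos_natCast_mul_eq_zero n.succ_ne_zero
  have sin_succ_pi : Real.sin ((n + 1) * Real.pi) = 0 := mod_cast Real.sin_nat_mul_pi (n + 1)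
  rw [intervalIntegral.integral_add (((hlog _).const_mul _).sub ((hlog _).const_mul _))
      ((hcos _).add (hcos _)),
    intervalIntegral.integral_sub ((hlog _).const_mul _) ((hlog _).const_mul _),
    intervalIntegral.integral_add (hcos _) (hcos _), intervalIntegral.integral_const_mul,
    intervalIntegral.integral_const_mul, succ_integral_zero, sin_succ_pi, Real.sin_nat_mul_pi,
    mul_zero, mul_zero, Real.sin_zero, sub_self, zero_mul, zero_mul] at integral_deriv
  linear_combination integral_deriv

theorem integral_cos_mul_log_one_sub_cos {n : ℕ} (hn : n ≠ 0) :
    ∫ u in 0..Real.pi, Real.cos (n * u) * Real.log (1 - Real.cos u) = -(Real.pi / n) := by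
  have scaled : n * (∫ u in 0..Real.pi, Real.cos (n * u) * Real.log (1 - Real.cos u)) =
      -Real.pi := by
    induction n, Nat.one_le_iff_ne_zero.2 hn using Nat.le_induction with
    | base => simpa using succ_mul_integral_cos_mul_log_one_sub_cos 0
    | succ k hk ih =>
      have hk_ne : k ≠ 0 := Nat.one_le_iff_ne_zero.1 hk
      rw [Nat.cast_succ, succ_mul_integral_cos_mul_log_one_sub_cos, ih hk_ne,
        integral_cos_natCast_mul_eq_zero hk_ne, sub_zero]
  rw [← neg_div, eq_div_iff (Nat.cast_ne_zero.2 hn), mul_comm, scaled]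

end FourierCoefficients

section LogarithmicKernel

theorem log_cos_sub_cos {a θ : ℝ} (h : Real.cos a ≠ Real.cos θ) :
    Real.log (Real.cos a - Real.cos θ) =
      (Real.log (1 - Real.cos (θ - a)) + Real.log (1 - Real.cos (θ + a))) / 2 := by
  have factorisation : (1 - Real.cos (θ - a)) * (1 - Real.cos (θ + a)) =
      (Real.cos a - Real.cos θ) ^ 2 := by
    rw [Real.cos_sub, Real.cos_add]
    linear_combination (Real.cos a ^ 2 - 1) * Real.sin_sq_add_cos_sq θ
      - Real.sin θ ^ 2 * Real.sin_sq_add_cos_sq a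
  have hprod := factorisation ▸ pow_ne_zero 2 (sub_ne_zero.2 h)
  rw [← Real.log_mul (left_ne_zero_of_mul hprod) (right_ne_zero_of_mul hprod), factorisation,
    Real.log_pow, Nat.cast_two, mul_div_cancel_left₀ _ two_ne_zero]

theorem ae_cos_ne_of_mem_uIoc_zero_pi (x : ℝ) :
    ∀ᵐ θ, θ ∈ Set.uIoc 0 Real.pi → x ≠ Real.cos θ := by
  filter_upwards [Measure.ae_ne volume (Real.arccos x)] with θ hθ hmem hcos
  rw [Set.uIoc_of_le Real.pi_nonneg] at hmem
  exact hθ (by rw [hcos, Real.arccos_cos hmem.1.le hmem.2])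

theorem integral_cos_mul_log_cos_sub_cos {n : ℕ} (hn : n ≠ 0) (a : ℝ) :
    ∫ θ in 0..Real.pi, Real.cos (n * θ) * Real.log (Real.cos a - Real.cos θ) =
      -(Real.pi / n) * Real.cos (n * a) := by
  have heven : (fun u => Real.log (1 - Real.cos u)).Even := fun u => by simp only [Real.cos_neg]
  have hper : (fun u => Real.log (1 - Real.cos u)).Periodic (2 * Real.pi) := fun u => by
    simp only [Real.cos_add_two_pi]
  calc ∫ θ in 0..Real.pi, Real.cos (n * θ) * Real.log (Real.cos a - Real.cos θ)
    _ = ∫ θ in 0..Real.pi, (Real.cos (n * θ) *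
          (Real.log (1 - Real.cos (θ - a)) + Real.log (1 - Real.cos (θ + a)))) / 2 := by
      refine intervalIntegral.integral_congr_ae ?_
      filter_upwards [ae_cos_ne_of_mem_uIoc_zero_pi (Real.cos a)] with θ hne hθ
      rw [log_cos_sub_cos (hne hθ), mul_div_assoc]
    _ = Real.cos (n * a) *
          ∫ u in 0..Real.pi, Real.cos (n * u) * Real.log (1 - Real.cos u) := by
      rw [intervalIntegral.integral_div, integral_cos_mul_add_translates heven hper
        (intervalIntegrable_log_sub_cos 1 0 (2 * Real.pi))]
      ring
    _ = -(Real.pi / n) * Real.cos (n * a) := by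
      rw [integral_cos_mul_log_one_sub_cos hn, mul_comm]

theorem integrableOn_mul_log_abs_sub_div_sqrt {g : ℝ → ℝ} (hg : Continuous g) (x : ℝ) :
    IntegrableOn (fun t => g t * Real.log |x - t| / √(1 - t ^ 2)) (Set.Ioo (-1) 1) := by
  rw [integrableOn_div_sqrt_one_sub_sq_iff fun t => g t * Real.log |x - t|]
  simp only [Real.log_abs]
  exact intervalIntegrable_mul_log_sub_cos (hg.comp Real.continuous_cos) x 0 Real.pi

end LogarithmicKernel

theorem singular_integral_identity_general {n : ℕ} (hn : n ≠ 0) :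
    ∀ x ∈ Set.Icc (-1 : ℝ) 1,
      IntegrableOn (fun t => (T ℝ n).eval t * Real.log |x - t| / √(1 - t ^ 2)) (Set.Ioo (-1) 1) ∧
      ∫ t in Set.Ioo (-1) 1, (T ℝ n).eval t * Real.log |x - t| / √(1 - t ^ 2) =
        -(Real.pi / n) * (T ℝ n).eval x := by
  intro x hx
  refine ⟨integrableOn_mul_log_abs_sub_div_sqrt (T ℝ n).continuous x, ?_⟩
  obtain ⟨a, rfl⟩ : ∃ a, Real.cos a = x := ⟨Real.arccos x, Real.cos_arccos hx.1 hx.2⟩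
  rw [integral_div_sqrt_one_sub_sq fun t => (T ℝ n).eval t * Real.log |Real.cos a - t|]
  simp only [Real.log_abs, Polynomial.Chebyshev.T_real_cos, Int.cast_natCast]
  exact integral_cos_mul_log_cos_sub_cos hn a

/-- The singular integral identity `∫_{−1}^{1} t·log|x−t|/√(1−t²) dt = −π·x`
for `x ∈ [−1,1]`, underlying the exact solution `φ(x) = √(1−x²)` of the test
problem `𝒲φ = 1/2` on the open curve `Γ = (−1,1)`. -/
theorem singular_integral_identity :
    ∀ x ∈ Set.Icc (-1 : ℝ) 1,
      IntegrableOn (fun t => t * Real.log |x - t| / Real.sqrt (1 - t ^ 2))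
        (Set.Ioo (-1 : ℝ) 1) ∧
      (∫ t in Set.Ioo (-1 : ℝ) 1, t * Real.log |x - t| / Real.sqrt (1 - t ^ 2))
        = -Real.pi * x := by
  simpa using singular_integral_identity_general one_ne_zero
end

section
/- Let U be a real vector space, V a real Hilbert space, b : U × V → ℝ a bilinear form, and Θ : U → V a linear map satisfying ⟪Θu, w⟫_V = b(u,w) for all u ∈ U and w ∈ V. Let F : V → ℝ be linear, let W ⊆ U be a subspace, and suppose u ∈ U satisfies b(u,w) = F(w) for all w ∈ V, while u_h ∈ W satisfies b(u_h, Θz) = F(Θz) for all z ∈ W. Then for every z ∈ W one has ‖Θ(u − u_h)‖_V ≤ ‖Θ(u − z)‖_V; that is, u_h is a best approximation of u from W in the energy norm ‖u‖_E := ‖Θu‖_V. -/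
open RealInnerProductSpace

/-!
The defining identity of `Θ` turns the Petrov–Galerkin equations with test space `Θ(W)` into
orthogonality of `Θu - Θu_h` to `Θ(W)`. Hence `Θu_h` is the orthogonal projection of `Θu` onto
`Θ(W)`, and by the Pythagoras theorem no element of `Θ(W)` is closer to `Θu`.
-/

section OrthogonalError

variable {𝕜 E : Type*} [RCLike 𝕜] [SeminormedAddCommGroup E] [InnerProductSpace 𝕜 E]

theorem norm_le_norm_add_of_inner_eq_zero {x y : E} (h : inner 𝕜 x y = 0) :
    ‖x‖ ≤ ‖x + y‖ := by
  refine (mul_self_le_mul_self_iff (norm_nonneg _) (norm_nonneg _)).mpr ?_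
  calc
    ‖x‖ * ‖x‖ ≤ ‖x‖ * ‖x‖ + ‖y‖ * ‖y‖ := le_add_of_nonneg_right (mul_self_nonneg _)
    _ = ‖x + y‖ * ‖x + y‖ := (norm_add_sq_eq_norm_sq_add_norm_sq_of_inner_eq_zero x y h).symm

theorem norm_sub_le_norm_sub_of_forall_inner_eq_zero {K : Submodule 𝕜 E} {x y z : E}
    (hy : y ∈ K) (hxy : ∀ w ∈ K, inner 𝕜 (x - y) w = 0) (hz : z ∈ K) :
    ‖x - y‖ ≤ ‖x - z‖ := by
  simpa only [sub_add_sub_cancel] using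
    norm_le_norm_add_of_inner_eq_zero (hxy (y - z) (K.sub_mem hy hz))

end OrthogonalError

section TrialToTest

variable {𝕜 U V : Type*} [RCLike 𝕜] [AddCommGroup U] [Module 𝕜 U]
  [SeminormedAddCommGroup V] [InnerProductSpace 𝕜 V]

/-- `Θ` is the trial-to-test operator of the form `b`: it sends a trial vector `u` to the Riesz
representative of `b u`, its optimal test vector. The form is a bare function, which the identity
forces to be bilinear for `𝕜 = ℝ` and conjugate-linear in `u` for `𝕜 = ℂ`. -/
def IsTrialToTest (b : U → V → 𝕜) (Θ : U →ₗ[𝕜] V) : Prop :=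
  ∀ u w, inner 𝕜 (Θ u) w = b u w

theorem IsTrialToTest.inner_sub_eq_zero_iff {b : U → V → 𝕜} {Θ : U →ₗ[𝕜] V}
    (hΘ : IsTrialToTest b Θ) {u v : U} {w : V} :
    inner 𝕜 (Θ u - Θ v) w = 0 ↔ b u w = b v w := by
  rw [inner_sub_left, hΘ, hΘ, sub_eq_zero]

theorem dpg_best_approximation_general {b : U → V → 𝕜} {Θ : U →ₗ[𝕜] V}
    (hΘ : IsTrialToTest b Θ) {F : V → 𝕜} {W : Submodule 𝕜 U}
    {u : U} (hu : ∀ z ∈ W, b u (Θ z) = F (Θ z))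
    {uh : U} (huhW : uh ∈ W) (huh : ∀ z ∈ W, b uh (Θ z) = F (Θ z)) :
    ∀ z ∈ W, ‖Θ (u - uh)‖ ≤ ‖Θ (u - z)‖ := by
  have galerkin_orthogonality : ∀ w ∈ W.map Θ, inner 𝕜 (Θ u - Θ uh) w = 0 := by
    rintro _ ⟨y, hy, rfl⟩
    exact hΘ.inner_sub_eq_zero_iff.mpr ((hu y hy).trans (huh y hy).symm)
  intro z hz
  rw [map_sub, map_sub]
  exact norm_sub_le_norm_sub_of_forall_inner_eq_zero (Submodule.mem_map_of_mem huhW)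
    galerkin_orthogonality (Submodule.mem_map_of_mem hz)

end TrialToTest

/-- Optimal convergence of the DPG method with optimal test functions: if `Θ`
is the trial-to-test operator, `⟪Θu, w⟫_V = b(u,w)`, `u` solves the continuous
problem and `u_h ∈ W` solves the discrete Petrov–Galerkin problem with test
space `Θ(W)`, then `u_h` is a best approximation of `u` from `W` in the energy
norm `‖u‖_E = ‖Θu‖_V`. -/
theorem dpg_best_approximation
    {U V : Type*} [AddCommGroup U] [Module ℝ U]
    [NormedAddCommGroup V] [InnerProductSpace ℝ V] [CompleteSpace V]
    (b : U →ₗ[ℝ] V →ₗ[ℝ] ℝ) (Θ : U →ₗ[ℝ] V)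
    (hΘ : ∀ (u : U) (w : V), ⟪Θ u, w⟫ = b u w)
    (F : V →ₗ[ℝ] ℝ) (W : Submodule ℝ U)
    (u : U) (hu : ∀ w : V, b u w = F w)
    (uh : U) (huhW : uh ∈ W)
    (huh : ∀ z ∈ W, b uh (Θ z) = F (Θ z)) :
    ∀ z ∈ W, ‖Θ (u - uh)‖ ≤ ‖Θ (u - z)‖ :=
  dpg_best_approximation_general (b := fun v w => b v w) hΘ (fun z _ => hu (Θ z)) huhW huh
end
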